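/- arXiv:math/0403555 — 4 statements merged into one kernel-verified Lean document; each statement's English description precedes it below -/
import Mathlib

section
/- Let 𝔥 be a finite-dimensional real Lie algebra and let 𝔤 = 𝔥 ⊕ ℝe₀ as a vector space. Given a pair (ψ, f) ∈ End(𝔥) × 𝔥*, the skew bilinear extension of the bracket of 𝔥 defined by [x, e₀] := ψ(x) + f(x)e₀ for x ∈ 𝔥 (keeping [x,y] = [x,y]_𝔥 for x,y ∈ 𝔥) is a Lie bracket on 𝔤 if and only if f([x,y]) = 0 for all x,y ∈ 𝔥 and ψ([x,y]) = [ψ(x), y] + [x, ψ(y)] − f(x)ψ(y) + f(y)ψ(x) for all x,y ∈ 𝔥. Conversely, every Lie algebra 𝔤 containing 𝔥 as a codimension-1 subalgebra arises in this way from such a pair (ψ, f), after choosing a line ℝe₀ complementary to 𝔥. -/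
/-!
The Leibniz identity for the extended bracket on the triple `x, y, e₀`, with `x, y ∈ 𝔥`, has the
two conditions on `(ψ, f)` as its `𝔥`- and `e₀`-components; by skew bilinearity and the Jacobi
identity of `𝔥`, this triple already implies the identity in general. Conversely, if
`𝔤 = 𝔥 ⊕ ℝ e₀`, let `ψ` and `f` be the components of `x ↦ ⁅x, e₀⁆`. Then `(x, a) ↦ x + a e₀` is
injective and carries the extended bracket to the bracket of `𝔤`, so the extended bracket inherits
the Leibniz identity, and the two conditions follow from the first part.
-/

set_option maxHeartbeats 1000000
set_option maxRecDepth 8000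

noncomputable section

namespace ContactLie

/-- The skew-bilinear extension to `𝔥 ⊕ ℝ e₀` of the bracket of `𝔥`, determined by a pair
`(ψ, f)` through `⁅x, e₀⁆ = ψ x + f x • e₀`; an element `(x, a)` represents `x + a e₀`. -/
def extBracket {H : Type*} [LieRing H] [LieAlgebra ℝ H]
    (ψ : H →ₗ[ℝ] H) (f : Module.Dual ℝ H) (p q : H × ℝ) : H × ℝ :=
  (⁅p.1, q.1⁆ + q.2 • ψ p.1 - p.2 • ψ q.1, q.2 * f p.1 - p.2 * f q.1)

section Bracket

variable {R M L : Type*} [CommRing R] [AddCommGroup M] [Module R M] [LieRing L] [Module R L]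

/-- The bilinear map `B` is a Lie bracket on `M`: it is alternating and satisfies the Jacobi
identity, taken in Leibniz form as in `LieRing`. -/
def IsLieBracket (B : M →ₗ[R] M →ₗ[R] M) : Prop :=
  B.IsAlt ∧ ∀ u v w, B u (B v w) = B (B u v) w + B v (B u w)

theorem IsLieBracket.of_injective {B : M →ₗ[R] M →ₗ[R] M} {φ : M →ₗ[R] L}
    (hφ : Function.Injective φ) (hB : ∀ u v, φ (B u v) = ⁅φ u, φ v⁆) : IsLieBracket B := by
  refine ⟨fun u => hφ ?_, fun u v w => hφ ?_⟩
  · rw [hB, lie_self, map_zero]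
  · simp only [map_add, hB, leibniz_lie (φ u)]

end Bracket

section Extension

variable {R H : Type*} [CommRing R] [LieRing H] [LieAlgebra R H]

/-- The bracket `extBracket ψ f` over an arbitrary commutative ring, bundled as a bilinear map. -/
def extBracketBilin (ψ : H →ₗ[R] H) (f : Module.Dual R H) : H × R →ₗ[R] H × R →ₗ[R] H × R :=
  LinearMap.mk₂ R
    (fun p q => (⁅p.1, q.1⁆ + q.2 • ψ p.1 - p.2 • ψ q.1, q.2 • f p.1 - p.2 • f q.1))
    (by intros; ext <;> simp only [Prod.fst_add, Prod.snd_add, add_lie, map_add] <;> module)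
    (by intros; ext <;> simp only [Prod.smul_fst, Prod.smul_snd, smul_lie, map_smul] <;> module)
    (by intros; ext <;> simp only [Prod.fst_add, Prod.snd_add, lie_add, map_add] <;> module)
    (by intros; ext <;> simp only [Prod.smul_fst, Prod.smul_snd, lie_smul, map_smul] <;> module)

/-- The conditions on a pair `(ψ, f)` under which `⁅x, e₀⁆ = ψ x + f x • e₀` extends the Lie
bracket of `H` to `H ⊕ R e₀`. -/
def IsExtensionPair (ψ : H →ₗ[R] H) (f : Module.Dual R H) : Prop :=
  (∀ x y : H, f ⁅x, y⁆ = 0) ∧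
    ∀ x y : H, ψ ⁅x, y⁆ = ⁅ψ x, y⁆ + ⁅x, ψ y⁆ - f x • ψ y + f y • ψ x

variable {ψ : H →ₗ[R] H} {f : Module.Dual R H}

theorem extBracketBilin_apply (p q : H × R) :
    extBracketBilin ψ f p q =
      (⁅p.1, q.1⁆ + q.2 • ψ p.1 - p.2 • ψ q.1, q.2 * f p.1 - p.2 * f q.1) :=
  rfl

theorem extBracketBilin_isAlt : (extBracketBilin ψ f).IsAlt := fun p => by
  simp [extBracketBilin_apply]

theorem IsLieBracket.isExtensionPair (h : IsLieBracket (extBracketBilin ψ f)) :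
    IsExtensionPair ψ f := by
  have leibniz_e₀ (x y : H) :
      ⁅x, ψ y⁆ + f y • ψ x = ψ ⁅x, y⁆ + (⁅y, ψ x⁆ + f x • ψ y) ∧
        f y * f x = f ⁅x, y⁆ + f x * f y := by
    simpa [extBracketBilin_apply] using h.2 (x, 0) (y, 0) (0, 1)
  refine ⟨fun x y => ?_, fun x y => ?_⟩
  · linear_combination -(leibniz_e₀ x y).2
  · rw [← lie_skew (ψ x) y]
    linear_combination (norm := module) (-1 : R) • (leibniz_e₀ x y).1

theorem IsExtensionPair.isLieBracket (h : IsExtensionPair ψ f) :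
    IsLieBracket (extBracketBilin ψ f) := by
  obtain ⟨hf, hψ⟩ := h
  refine ⟨extBracketBilin_isAlt, fun ⟨x, a⟩ ⟨y, b⟩ ⟨z, c⟩ => Prod.ext ?_ ?_⟩
  · simp only [extBracketBilin_apply, Prod.fst_add, map_add, map_sub, map_smul, hψ, lie_add,
      lie_sub, lie_smul, add_lie, sub_lie, smul_lie]
    rw [leibniz_lie x y z, ← lie_skew (ψ x) y, ← lie_skew (ψ x) z, ← lie_skew (ψ y) z]
    module
  · simp only [extBracketBilin_apply, Prod.snd_add, map_add, map_sub, map_smul, hf, smul_eq_mul]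
    ring

theorem isLieBracket_extBracketBilin_iff :
    IsLieBracket (extBracketBilin ψ f) ↔ IsExtensionPair ψ f :=
  ⟨IsLieBracket.isExtensionPair, IsExtensionPair.isLieBracket⟩

end Extension

section Subalgebra

variable {R G : Type*} [CommRing R] [LieRing G] [LieAlgebra R G]

/-- The linear map `(x, a) ↦ x + a • e₀`; it is bijective exactly when `e₀` freely spans a
complement of `K`. -/
def extensionMap (K : LieSubalgebra R G) (e₀ : G) : K × R →ₗ[R] G :=
  K.toSubmodule.subtype.coprod (LinearMap.toSpanSingleton R G e₀)

theorem extensionMap_apply (K : LieSubalgebra R G) (e₀ : G) (p : K × R) :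
    extensionMap K e₀ p = p.1 + p.2 • e₀ :=
  rfl

theorem extensionMap_extBracketBilin {K : LieSubalgebra R G} {e₀ : G} {ψ : K →ₗ[R] K}
    {f : Module.Dual R K} (h : ∀ x : K, ⁅(x : G), e₀⁆ = (ψ x : G) + f x • e₀) (p q : K × R) :
    extensionMap K e₀ (extBracketBilin ψ f p q) = ⁅extensionMap K e₀ p, extensionMap K e₀ q⁆ := by
  simp only [extensionMap_apply, extBracketBilin_apply, lie_add, add_lie, lie_smul, smul_lie,
    lie_self, ← lie_skew e₀ (q.1 : G), h]
  push_cast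
  module

theorem exists_lie_eq_add_smul {K : LieSubalgebra R G} {e₀ : G}
    (he₀ : Function.Bijective (extensionMap K e₀)) :
    ∃ (ψ : K →ₗ[R] K) (f : Module.Dual R K), ∀ x : K, ⁅(x : G), e₀⁆ = (ψ x : G) + f x • e₀ := by
  let coords : G ≃ₗ[R] K × R := (LinearEquiv.ofBijective _ he₀).symm
  let lieE₀ : K →ₗ[R] G := (LieModule.toEnd R K G : K →ₗ[R] Module.End R G).flip e₀
  refine ⟨LinearMap.fst R K R ∘ₗ coords ∘ₗ lieE₀, LinearMap.snd R K R ∘ₗ coords ∘ₗ lieE₀,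
    fun x => ?_⟩
  exact (coords.symm_apply_apply ⁅(x : G), e₀⁆).symm

theorem exists_isExtensionPair {K : LieSubalgebra R G} {e₀ : G}
    (he₀ : Function.Bijective (extensionMap K e₀)) :
    ∃ (ψ : K →ₗ[R] K) (f : Module.Dual R K),
      IsExtensionPair ψ f ∧ ∀ x : K, ⁅(x : G), e₀⁆ = (ψ x : G) + f x • e₀ := by
  obtain ⟨ψ, f, h⟩ := exists_lie_eq_add_smul he₀
  have hB : IsLieBracket (extBracketBilin ψ f) :=
    .of_injective he₀.injective (extensionMap_extBracketBilin h)
  exact ⟨ψ, f, hB.isExtensionPair, h⟩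

end Subalgebra

theorem extensionMap_bijective {𝕜 G : Type*} [Field 𝕜] [LieRing G] [LieAlgebra 𝕜 G]
    {K : LieSubalgebra 𝕜 G} {e₀ : G} (he₀ : e₀ ∉ K)
    (htop : K.toSubmodule ⊔ Submodule.span 𝕜 {e₀} = ⊤) :
    Function.Bijective (extensionMap K e₀) := by
  have hne : e₀ ≠ 0 := fun h => he₀ (h ▸ K.zero_mem)
  constructor
  · rw [← LinearMap.ker_eq_bot, extensionMap, LinearMap.ker_coprod_of_disjoint_range]
    · simp [LinearMap.ker_toSpanSingleton, hne]
    · simpa [← LinearMap.span_singleton_eq_range] using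
        (Submodule.disjoint_span_singleton' hne).2 he₀
  · rw [← LinearMap.range_eq_top, extensionMap, LinearMap.range_coprod,
      Submodule.range_subtype, ← LinearMap.span_singleton_eq_range, htop]

theorem codim_one_extension_characterization_general
    {R H : Type*} [CommRing R] [LieRing H] [LieAlgebra R H] (ψ : H →ₗ[R] H)
    (f : Module.Dual R H) :
    (IsLieBracket (extBracketBilin ψ f) ↔ IsExtensionPair ψ f) ∧
      ∀ (G : Type*) (_ : LieRing G) (_ : LieAlgebra R G) (K : LieSubalgebra R G) (e₀ : G),
        Function.Bijective (extensionMap K e₀) →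
          ∃ (ψ' : K →ₗ[R] K) (f' : Module.Dual R K),
            IsExtensionPair ψ' f' ∧ ∀ x : K, ⁅(x : G), e₀⁆ = (ψ' x : G) + f' x • e₀ :=
  ⟨isLieBracket_extBracketBilin_iff, fun _ _ _ _ _ he₀ => exists_isExtensionPair he₀⟩

/-- The extension `extBracket ψ f` of the bracket of `𝔥` to `𝔤 = 𝔥 ⊕ ℝ e₀`
is a Lie bracket (it is bilinear and alternating by construction, so this means the Leibniz
(Jacobi) identity) iff `f` vanishes on brackets and
`ψ ⁅x, y⁆ = ⁅ψ x, y⁆ + ⁅x, ψ y⁆ - f x • ψ y + f y • ψ x`. Conversely, every Lie algebra `G`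
containing `𝔥` as a codimension-1 subalgebra arises this way from such a pair, after choosing
a complementary line `ℝ e₀`. -/
theorem codim_one_extension_characterization
    {H : Type*} [LieRing H] [LieAlgebra ℝ H] (ψ : H →ₗ[ℝ] H) (f : Module.Dual ℝ H) :
    (((∀ u : H × ℝ, extBracket ψ f u u = 0) ∧
      ∀ u v w : H × ℝ,
        extBracket ψ f u (extBracket ψ f v w) =
          extBracket ψ f (extBracket ψ f u v) w + extBracket ψ f v (extBracket ψ f u w)) ↔
      ((∀ x y : H, f ⁅x, y⁆ = 0) ∧
        (∀ x y : H, ψ ⁅x, y⁆ = ⁅ψ x, y⁆ + ⁅x, ψ y⁆ - f x • ψ y + f y • ψ x))) ∧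
    (∀ (G : Type*) (_ : LieRing G) (_ : LieAlgebra ℝ G) (H' : LieSubalgebra ℝ G)
        (e₀ : G), e₀ ∉ H' → H'.toSubmodule ⊔ Submodule.span ℝ {e₀} = ⊤ →
      ∃ (ψ' : ↥H' →ₗ[ℝ] ↥H') (f' : Module.Dual ℝ ↥H'),
        (∀ x y : ↥H', f' ⁅x, y⁆ = 0) ∧
        (∀ x y : ↥H', ψ' ⁅x, y⁆ = ⁅ψ' x, y⁆ + ⁅x, ψ' y⁆ - f' x • ψ' y + f' y • ψ' x) ∧
        ∀ x : ↥H', ⁅(x : G), e₀⁆ = (ψ' x : G) + f' x • e₀) := by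
  obtain ⟨isLie_iff, exists_pair⟩ := codim_one_extension_characterization_general ψ f
  refine ⟨isLie_iff, fun G _ _ K e₀ he₀ htop => ?_⟩
  obtain ⟨ψ', f', ⟨hf, hψ⟩, h⟩ := exists_pair G _ _ K e₀ (extensionMap_bijective he₀ htop)
  exact ⟨ψ', f', hf, hψ, h⟩

end ContactLie
end
end

section
/- Let 𝔤 be a finite-dimensional real Lie algebra containing a codimension-1 ideal 𝔥 which carries an exact symplectic form α (so dim 𝔤 = 2n+1 and dim 𝔥 = 2n). Choose e₀ ∈ 𝔤 ∖ 𝔥, extend α to 𝔤 by α(e₀) = 0, and let e₀* ∈ 𝔤* satisfy e₀*(e₀) = 1, e₀*(𝔥) = 0. Then for all but at most one value of s ∈ ℝ, the form η_s := α + s e₀* is a contact form on 𝔤; in particular 𝔤 is a contact Lie algebra and the restriction of η_s to 𝔥 equals α. -/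
set_option maxHeartbeats 1000000
set_option maxRecDepth 8000

noncomputable section

namespace ContactLie

section Core

variable {L : Type*} [LieRing L] [LieAlgebra ℝ L]

/-- The Chevalley–Eilenberg differential of a linear form: `∂η (x, y) = -η ⁅x, y⁆`,
as an alternating 2-form. -/
def dee (η : Module.Dual ℝ L) : L [⋀^Fin 2]→ₗ[ℝ] ℝ where
  toFun v := -η ⁅v 0, v 1⁆
  map_update_add' m i x y := by
    fin_cases i <;>
      simp only [Function.update, Fin.forall_fin_two, add_lie, lie_add, map_add, neg_add] <;>
      split <;> simp_all <;> ring
  map_update_smul' m i c x := by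
    fin_cases i <;>
      simp [Function.update, Fin.forall_fin_two, smul_lie, lie_smul, map_smul]
  map_eq_zero_of_eq' v i j hv hij := by
    have h01 : v 0 = v 1 := by
      fin_cases i <;> fin_cases j <;> simp_all
    show -η ⁅v 0, v 1⁆ = 0
    rw [h01, lie_self, map_zero, neg_zero]

/-- A linear form viewed as an alternating 1-form. -/
def oneForm (η : Module.Dual ℝ L) : L [⋀^Fin 1]→ₗ[ℝ] ℝ :=
  AlternatingMap.ofSubsingleton ℝ L ℝ 0 η

/-- The wedge product of real-valued alternating forms. -/
def wedge {a b : ℕ} (f : L [⋀^Fin a]→ₗ[ℝ] ℝ) (g : L [⋀^Fin b]→ₗ[ℝ] ℝ) :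
    L [⋀^Fin (a + b)]→ₗ[ℝ] ℝ :=
  AlternatingMap.domDomCongr finSumFinEquiv
    ((TensorProduct.lid ℝ ℝ).toLinearMap.compAlternatingMap (f.domCoprod g))

/-- The `n`-th wedge power of an alternating 2-form. -/
def pow2 (ω : L [⋀^Fin 2]→ₗ[ℝ] ℝ) : (n : ℕ) → L [⋀^Fin (2 * n)]→ₗ[ℝ] ℝ
  | 0 => AlternatingMap.constOfIsEmpty ℝ L (Fin 0) 1
  | n + 1 => wedge (pow2 ω n) ω

/-- `η` is a contact form on the Lie algebra `L` of dimension `2 n + 1`: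
the alternating `(2 n + 1)`-form `(∂η)ⁿ ∧ η` is nonzero. -/
def IsContact (n : ℕ) (η : Module.Dual ℝ L) : Prop :=
  Module.finrank ℝ L = 2 * n + 1 ∧ wedge (pow2 (dee η) n) (oneForm η) ≠ 0

/-- `α` is an exact symplectic form on the Lie algebra `L` of dimension `2 n`:
the alternating `2 n`-form `(∂α)ⁿ` is nonzero, i.e. `∂α` is nondegenerate. -/
def IsExactSymplectic (n : ℕ) (α : Module.Dual ℝ L) : Prop :=
  Module.finrank ℝ L = 2 * n ∧ pow2 (dee α) n ≠ 0

end Core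

/-!
The functional `β = e₀*` vanishes exactly on the ideal `𝔥`, which forces it to vanish on all
brackets, so `∂η_s = ∂α` does not depend on `s` and `(∂η_s)ⁿ ∧ η_s = (∂α)ⁿ ∧ α + s (∂α)ⁿ ∧ β` is
affine in `s`. Its slope is nonzero: evaluated on vectors of `𝔥` followed by a vector `e` outside
`𝔥`, the only shuffle that contributes to `(∂α)ⁿ ∧ β` is the identity, and this leaves
`(∂α)ⁿ|_𝔥` times `β e`.
-/

theorem exists_forall_ne_add_smul_ne_zero {R M : Type*} [Ring R] [IsDomain R] [AddCommGroup M]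
    [Module R M] [Module.IsTorsionFree R M] (u : M) {v : M} (hv : v ≠ 0) :
    ∃ c₀ : R, ∀ c : R, c ≠ c₀ → u + c • v ≠ 0 := by
  by_cases h : ∃ c₀ : R, u + c₀ • v = 0
  · obtain ⟨c₀, hc₀⟩ := h
    refine ⟨c₀, fun c hc hzero => hc (smul_left_injective R hv ?_)⟩
    exact add_left_cancel (hzero.trans hc₀.symm)
  · exact ⟨0, fun c _ hzero => h ⟨c, hzero⟩⟩

theorem eq_ker_of_le_of_finrank_eq_add_one {K V : Type*} [Field K] [AddCommGroup V] [Module K V]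
    {W : Submodule K V} {β : Module.Dual K V}
    (hW : Module.finrank K V = Module.finrank K W + 1) (hβ : β ≠ 0) (hle : W ≤ LinearMap.ker β) :
    W = LinearMap.ker β := by
  have : FiniteDimensional K V := Module.finite_of_finrank_pos (by omega)
  refine Submodule.eq_of_le_of_finrank_eq hle ?_
  have := Module.Dual.finrank_ker_add_one_of_ne_zero hβ
  omega

theorem dual_lie_eq_zero_of_ker_lie {R L : Type*} [CommRing R] [NoZeroDivisors R] [LieRing L]
    [LieAlgebra R L] {β : Module.Dual R L} (hker : ∀ x y : L, β y = 0 → β ⁅x, y⁆ = 0) (x y : L) :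
    β ⁅x, y⁆ = 0 := by
  by_cases hy : β y = 0
  · exact hker x y hy
  have h : β ⁅y, β x • y - β y • x⁆ = 0 := hker _ _ (by simp [mul_comm])
  have hyx : β ⁅y, x⁆ = 0 := by simpa [hy] using h
  rw [← lie_skew, map_neg, hyx, neg_zero]

section Wedge

open TensorProduct

variable {L M : Type*} [LieRing L] [LieAlgebra ℝ L] [LieRing M] [LieAlgebra ℝ M] {a b : ℕ}

theorem wedge_add_right (f : L [⋀^Fin a]→ₗ[ℝ] ℝ) (g₁ g₂ : L [⋀^Fin b]→ₗ[ℝ] ℝ) :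
    wedge f (g₁ + g₂) = wedge f g₁ + wedge f g₂ := by
  ext v
  simp [wedge, ← AlternatingMap.domCoprod'_apply, tmul_add]

theorem wedge_smul_right (f : L [⋀^Fin a]→ₗ[ℝ] ℝ) (c : ℝ) (g : L [⋀^Fin b]→ₗ[ℝ] ℝ) :
    wedge f (c • g) = c • wedge f g := by
  ext v
  simp [wedge, ← AlternatingMap.domCoprod'_apply]

theorem wedge_compLinearMap (f : L [⋀^Fin a]→ₗ[ℝ] ℝ) (g : L [⋀^Fin b]→ₗ[ℝ] ℝ) (φ : M →ₗ[ℝ] L) :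
    (wedge f g).compLinearMap φ = wedge (f.compLinearMap φ) (g.compLinearMap φ) := by
  ext v
  simp only [wedge, AlternatingMap.compLinearMap_apply, AlternatingMap.domDomCongr_apply,
    LinearMap.compAlternatingMap_apply, AlternatingMap.domCoprod_apply, sum_apply]
  congr 1
  refine Finset.sum_congr rfl fun σ _ => ?_
  induction σ using Quotient.inductionOn'
  rfl

theorem pow2_compLinearMap (ω : L [⋀^Fin 2]→ₗ[ℝ] ℝ) (φ : M →ₗ[ℝ] L) (n : ℕ) :
    (pow2 ω n).compLinearMap φ = pow2 (ω.compLinearMap φ) n := by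
  induction n with
  | zero => rfl
  | succ n ih => rw [pow2, pow2, ← ih, ← wedge_compLinearMap]

theorem modSumCongr_mk_eq_mk_one_of_forall_inr {ι κ : Type*} [Finite ι] [Finite κ]
    {σ : Equiv.Perm (ι ⊕ κ)} (hσ : ∀ k, ∃ j, σ (Sum.inr k) = Sum.inr j) :
    (Quotient.mk'' σ : Equiv.Perm.ModSumCongr ι κ) = Quotient.mk'' 1 := by
  refine (Quotient.sound' ?_).symm
  rw [QuotientGroup.leftRel_apply, inv_one, one_mul]
  apply Equiv.Perm.mem_sumCongrHom_range_of_perm_mapsTo_inl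
  rw [Equiv.Perm.perm_mapsTo_inl_iff_mapsTo_inr]
  rintro _ ⟨k, rfl⟩
  obtain ⟨j, hj⟩ := hσ k
  exact ⟨j, hj.symm⟩

theorem wedge_append_of_forall_eq_zero (f : L [⋀^Fin a]→ₗ[ℝ] ℝ) (g : L [⋀^Fin b]→ₗ[ℝ] ℝ)
    {w : Fin a → L} (hw : ∀ u i j, u j = w i → g u = 0) (u : Fin b → L) :
    wedge f g (Fin.append w u) = f w * g u := by
  suffices h : f.domCoprod g (Fin.append w u ∘ finSumFinEquiv) = f w ⊗ₜ[ℝ] g u from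
    (congrArg (TensorProduct.lid ℝ ℝ) h).trans (TensorProduct.lid_tmul _ _)
  rw [AlternatingMap.domCoprod_apply, sum_apply]
  refine (Finset.sum_eq_single
    (Quotient.mk'' 1 : Equiv.Perm.ModSumCongr (Fin a) (Fin b)) ?_ (by simp)).trans
    (by simp [AlternatingMap.domCoprod.summand_mk''])
  intro σ _ hσ
  induction σ using Quotient.inductionOn' with | _ σ
  obtain ⟨k, i, hki⟩ : ∃ k i, σ (Sum.inr k) = Sum.inl i := by
    contrapose! hσ
    refine modSumCongr_mk_eq_mk_one_of_forall_inr fun k => ?_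
    rcases hk : σ (Sum.inr k) with i | j
    · exact absurd hk (hσ k i)
    · exact ⟨j, rfl⟩
  have hg : g (fun j => Fin.append w u (finSumFinEquiv (σ (Sum.inr j)))) = 0 :=
    hw _ i k (by simp [hki])
  rw [AlternatingMap.domCoprod.summand_mk'']
  simp [hg]

theorem wedge_oneForm_ne_zero {W : Type*} [AddCommGroup W] [Module ℝ W]
    {f : L [⋀^Fin a]→ₗ[ℝ] ℝ} {β : Module.Dual ℝ L} {φ : W →ₗ[ℝ] L}
    (hf : f.compLinearMap φ ≠ 0) (hβ : β ≠ 0) (hβφ : ∀ x, β (φ x) = 0) :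
    wedge f (oneForm β) ≠ 0 := by
  obtain ⟨w, hw⟩ := DFunLike.ne_iff.1 hf
  obtain ⟨e, he⟩ := DFunLike.ne_iff.1 hβ
  have hvanish (u : Fin 1 → L) (i : Fin a) (j : Fin 1) (hu : u j = φ (w i)) :
      oneForm β u = 0 := by
    rw [Subsingleton.elim j 0] at hu
    simp [oneForm, hu, hβφ]
  intro hzero
  have hval := wedge_append_of_forall_eq_zero f (oneForm β) hvanish ![e]
  rw [hzero] at hval
  exact mul_ne_zero hw he hval.symm

end Wedge

section Contact

variable {L M : Type*} [LieRing L] [LieAlgebra ℝ L] [LieRing M] [LieAlgebra ℝ M]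

theorem oneForm_add_smul (η θ : Module.Dual ℝ L) (c : ℝ) :
    oneForm (η + c • θ) = oneForm η + c • oneForm θ :=
  rfl

theorem dee_add_smul (η θ : Module.Dual ℝ L) (c : ℝ) :
    dee (η + c • θ) = dee η + c • dee θ := by
  ext v
  simp [dee, add_comm]

theorem dee_compLinearMap (η : Module.Dual ℝ L) (φ : M →ₗ⁅ℝ⁆ L) :
    (dee η).compLinearMap (φ : M →ₗ[ℝ] L) = dee (η ∘ₗ (φ : M →ₗ[ℝ] L)) := by
  ext v
  simp [dee]

theorem dee_eq_zero_of_ker_lie {β : Module.Dual ℝ L}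
    (hker : ∀ x y : L, β y = 0 → β ⁅x, y⁆ = 0) : dee β = 0 := by
  ext v
  simp [dee, dual_lie_eq_zero_of_ker_lie hker]

theorem exists_forall_ne_isContact_add_smul {n : ℕ} (hdim : Module.finrank ℝ L = 2 * n + 1)
    {η β : Module.Dual ℝ L} (hβ : dee β = 0)
    (hwedge : wedge (pow2 (dee η) n) (oneForm β) ≠ 0) :
    ∃ s₀ : ℝ, ∀ s : ℝ, s ≠ s₀ → IsContact n (η + s • β) := by
  obtain ⟨s₀, hs₀⟩ := exists_forall_ne_add_smul_ne_zero (R := ℝ)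
    (wedge (pow2 (dee η) n) (oneForm η)) hwedge
  refine ⟨s₀, fun s hs => ⟨hdim, ?_⟩⟩
  rw [dee_add_smul, hβ, smul_zero, add_zero, oneForm_add_smul, wedge_add_right, wedge_smul_right]
  exact hs₀ s hs

end Contact

/-- If a Lie algebra `𝔤` contains a codimension-1 ideal `𝔥` carrying an
exact symplectic form `α`, then, extending `α` by `α (e₀) = 0` along a complement `ℝ e₀` and
letting `e₀*` be the form with `e₀* (e₀) = 1`, `e₀* (𝔥) = 0`, the form `η_s = α + s e₀*` is a
contact form on `𝔤` for all but at most one value of `s`; in particular `𝔤` is a contact Lie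
algebra, and the restriction of `η_s` to `𝔥` is `α`. -/
theorem codim_one_exact_symplectic_ideal_gives_contact
    {G : Type*} [LieRing G] [LieAlgebra ℝ G] (n : ℕ)
    (H' : LieSubalgebra ℝ G) (hideal : ∀ x : G, ∀ y ∈ H', ⁅x, y⁆ ∈ H')
    (hcodim : Module.finrank ℝ G = Module.finrank ℝ ↥H' + 1)
    (α : Module.Dual ℝ ↥H') (hα : IsExactSymplectic n α)
    (e₀ : G) (he₀ : e₀ ∉ H')
    (αe : Module.Dual ℝ G) (hαe : ∀ x : ↥H', αe x = α x) (hαe₀ : αe e₀ = 0)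
    (β : Module.Dual ℝ G) (hβ₀ : β e₀ = 1) (hβ : ∀ x ∈ H', β x = 0) :
    ∃ s₀ : ℝ, ∀ s : ℝ, s ≠ s₀ →
      IsContact n (αe + s • β) ∧ ∀ x : ↥H', (αe + s • β) x = α x := by
  obtain ⟨hdim, hα_ne⟩ := hα
  have hβ_ne : β ≠ 0 := by
    rintro rfl
    simp at hβ₀
  have hker : H'.toSubmodule = LinearMap.ker β :=
    eq_ker_of_le_of_finrank_eq_add_one hcodim hβ_ne hβ
  have hclosed : dee β = 0 := dee_eq_zero_of_ker_lie fun x y hy =>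
    hβ _ (hideal x y (hker.ge hy))
  have hres : (pow2 (dee αe) n).compLinearMap (H'.incl : H' →ₗ[ℝ] G) = pow2 (dee α) n := by
    rw [pow2_compLinearMap, dee_compLinearMap]
    exact congrArg (fun η => pow2 (dee η) n) (LinearMap.ext hαe)
  have hwedge : wedge (pow2 (dee αe) n) (oneForm β) ≠ 0 :=
    wedge_oneForm_ne_zero (hres ▸ hα_ne) hβ_ne fun x => hβ _ x.2
  obtain ⟨s₀, hs₀⟩ := exists_forall_ne_isContact_add_smul (by omega) hclosed hwedge
  exact ⟨s₀, fun s hs => ⟨hs₀ s hs, fun x => by simp [hαe, hβ _ x.2]⟩⟩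

end ContactLie
end
end

section
/- Let 𝔤 be a finite-dimensional real Lie algebra of odd dimension which is decomposable, i.e., 𝔤 = 𝒜₁ ⊕ 𝒜₂ is a direct sum of two nonzero ideals 𝒜₁ and 𝒜₂. Then 𝔤 admits a contact form if and only if either 𝒜₁ admits a contact form and 𝒜₂ admits an exact symplectic form, or 𝒜₂ admits a contact form and 𝒜₁ admits an exact symplectic form. -/
set_option maxHeartbeats 1000000
set_option maxRecDepth 8000

noncomputable section

namespace ContactLie

/-! The radical of `∂η` decides everything. On a space of dimension `2 n` the form `(∂η)ⁿ` is
nonzero iff the radical is trivial, and in dimension `2 n + 1` the form `(∂η)ⁿ ∧ η` is nonzero iff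
`η` kills no nonzero vector of the radical: a form of top degree that is annihilated by a nonzero
vector vanishes, while a symplectic family evaluates `(∂η)ⁿ` to a nonzero number. Two complementary
ideals commute, so the radical of `∂η` is the sum of the radicals of its restrictions to them. The
ideal of odd dimension always contains a nonzero radical vector; were the other restriction
degenerate too, some combination of two radical vectors, one from each ideal, would be killed by
`η`. -/

section Permutations

open Equiv

theorem exists_eq_prodCongrLeft_mul_prodCongrRight {α β : Type*} [Finite α] [Finite β] [Nonempty β]
    {σ : Perm (α × β)} (h : ∀ a b b', (σ (a, b)).1 = (σ (a, b')).1) :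
    ∃ (π : Perm α) (τ : α → Perm β), σ = prodCongrLeft (fun _ ↦ π) * prodCongrRight τ := by
  obtain ⟨b₀⟩ := ‹Nonempty β›
  have hsurj : Function.Surjective fun a ↦ (σ (a, b₀)).1 := fun a' ↦ by
    obtain ⟨⟨a, b⟩, hab⟩ := σ.surjective (a', b₀)
    exact ⟨a, (h a b₀ b).trans (congrArg Prod.fst hab)⟩
  have hinj (a : α) : Function.Injective fun b ↦ (σ (a, b)).2 := fun b b' hbb' ↦
    congrArg Prod.snd (σ.injective (Prod.ext (h a b b') hbb'))
  refine ⟨.ofBijective _ (Finite.surjective_iff_bijective.mp hsurj),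
    fun a ↦ .ofBijective _ (Finite.injective_iff_bijective.mp (hinj a)), ?_⟩
  ext1 ⟨a, b⟩
  exact Prod.ext (h a b b₀) rfl

end Permutations

section BilinForm

open Module

variable {K V : Type*} [Field K] [AddCommGroup V] [Module K V] {B : LinearMap.BilinForm K V}

/-- A family of pairs `(p i 0, p i 1)` spanning pairwise orthogonal hyperbolic planes of an
alternating form `B`: a symplectic basis of its span, up to rescaling. -/
structure IsHyperbolicFamily (B : LinearMap.BilinForm K V) {ι : Type*} (p : ι → Fin 2 → V) :
    Prop where
  apply_eq_zero : ∀ ⦃i j⦄, i ≠ j → ∀ c d, B (p i c) (p j d) = 0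
  apply_ne_zero : ∀ i, B (p i 0) (p i 1) ≠ 0

theorem IsHyperbolicFamily.cons (hB : B.IsRefl) {k : ℕ} {p : Fin k → Fin 2 → V}
    (hp : IsHyperbolicFamily B p) {q : Fin 2 → V} (hq : B (q 0) (q 1) ≠ 0)
    (hqp : ∀ i c d, B (q c) (p i d) = 0) :
    IsHyperbolicFamily B (Fin.cons q p : Fin (k + 1) → Fin 2 → V) where
  apply_eq_zero i j hij c d := by
    cases i using Fin.cases <;> cases j using Fin.cases
    · exact absurd rfl hij
    · exact hqp _ c d
    · exact hB _ _ (hqp _ d c)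
    · exact hp.apply_eq_zero (fun h ↦ hij (congrArg _ h)) c d
  apply_ne_zero := Fin.cases hq hp.apply_ne_zero

theorem coeffs_eq_zero_of_apply_ne_zero (hB : B.IsAlt) {x y : V} (hxy : B x y ≠ 0) {a b : K}
    (hx : B x (a • x + b • y) = 0) (hy : B y (a • x + b • y) = 0) : a = 0 ∧ b = 0 := by
  have hyx : B y x ≠ 0 := fun h ↦ hxy (hB.isRefl y x h)
  simp only [map_add, map_smul, hB.self_eq_zero, smul_eq_mul, mul_zero, zero_add, add_zero,
    mul_eq_zero, hxy, hyx, or_false] at hx hy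
  exact ⟨hy, hx⟩

theorem linearIndependent_pair_of_apply_ne_zero (hB : B.IsAlt) {x y : V} (hxy : B x y ≠ 0) :
    LinearIndependent K ![x, y] :=
  LinearIndependent.pair_iff.mpr fun a b hab ↦
    coeffs_eq_zero_of_apply_ne_zero hB hxy (by rw [hab, map_zero]) (by rw [hab, map_zero])

theorem finrank_ker_restrict_orthogonal (hB : B.IsRefl) {W : Submodule K V}
    (hW : IsCompl W (B.orthogonal W)) :
    finrank K (LinearMap.ker (B.restrict (B.orthogonal W))) = finrank K (LinearMap.ker B) := by
  have hker : LinearMap.ker B ≤ B.orthogonal W := fun x hx w _ ↦ hB _ _ (congr($hx w))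
  rw [LinearMap.BilinForm.ker_restrict_eq_of_codisjoint hW.symm.codisjoint
    fun x hx w hw ↦ hB _ _ (hx w hw)]
  exact (Submodule.comapSubtypeEquivOfLe hker).finrank_eq

variable [FiniteDimensional K V]

theorem isCompl_span_pair_orthogonal (hB : B.IsAlt) {x y : V} (hxy : B x y ≠ 0) :
    IsCompl (Submodule.span K {x, y}) (B.orthogonal (Submodule.span K {x, y})) := by
  rw [LinearMap.BilinForm.isCompl_orthogonal_iff_disjoint hB.isRefl, Submodule.disjoint_def]
  intro z hz hz'
  obtain ⟨a, b, rfl⟩ := Submodule.mem_span_pair.mp hz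
  obtain ⟨rfl, rfl⟩ := coeffs_eq_zero_of_apply_ne_zero hB hxy
    (hz' x (Submodule.mem_span_of_mem (by simp))) (hz' y (Submodule.mem_span_of_mem (by simp)))
  simp

theorem exists_isHyperbolicFamily (hB : B.IsAlt) :
    ∃ (k : ℕ) (p : Fin k → Fin 2 → V),
      IsHyperbolicFamily B p ∧ 2 * k + finrank K (LinearMap.ker B) = finrank K V := by
  induction hd : finrank K V using Nat.strong_induction_on generalizing V with
  | _ d ih =>
  by_cases hzero : B = 0
  · exact ⟨0, nofun, ⟨nofun, nofun⟩, by
      rw [hzero, LinearMap.ker_zero, finrank_top, hd, mul_zero, zero_add]⟩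
  obtain ⟨x, y, hxy⟩ : ∃ x y, B x y ≠ 0 := by
    by_contra! h
    exact hzero (LinearMap.ext₂ h)
  set W := Submodule.span K {x, y}
  have hW : IsCompl W (B.orthogonal W) := isCompl_span_pair_orthogonal hB hxy
  have hdimW : finrank K W = 2 := by
    have hcard := finrank_span_eq_card (linearIndependent_pair_of_apply_ne_zero hB hxy)
    rwa [Matrix.range_cons_cons_empty, Fintype.card_fin] at hcard
  have hdim : finrank K W + finrank K (B.orthogonal W) = finrank K V :=
    Submodule.finrank_add_eq_of_isCompl hW
  obtain ⟨k, p, hp, hk⟩ := ih (finrank K (B.orthogonal W)) (by omega)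
    (B := B.restrict (B.orthogonal W)) (fun z ↦ hB z) rfl
  rw [finrank_ker_restrict_orthogonal hB.isRefl hW] at hk
  have hp' : IsHyperbolicFamily B fun i c ↦ (p i c : V) := ⟨hp.1, hp.2⟩
  refine ⟨k + 1, _, hp'.cons hB.isRefl (q := ![x, y]) hxy fun i c d ↦ (p i d).2 _ ?_, by omega⟩
  fin_cases c <;> exact Submodule.mem_span_of_mem (by simp)

end BilinForm

section TwoForm

open Equiv Module

variable {K V : Type*} [Field K] [AddCommGroup V] [Module K V]

/-- The bilinear form underlying an alternating 2-form. -/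
def toBilinForm (ω : V [⋀^Fin 2]→ₗ[K] K) : LinearMap.BilinForm K V :=
  LinearMap.mk₂ K (fun x y ↦ ω ![x, y])
    (fun x x' y ↦ ω.map_vecCons_add ![y] x x')
    (fun a x y ↦ ω.map_vecCons_smul ![y] a x)
    (fun x y y' ↦ (ω.curryLeft x).map_vecCons_add ![] y y')
    (fun a x y ↦ (ω.curryLeft x).map_vecCons_smul ![] a y)

theorem toBilinForm_apply (ω : V [⋀^Fin 2]→ₗ[K] K) (x y : V) : toBilinForm ω x y = ω ![x, y] :=
  rfl

theorem toBilinForm_apply_apply (ω : V [⋀^Fin 2]→ₗ[K] K) (v : Fin 2 → V) :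
    toBilinForm ω (v 0) (v 1) = ω v :=
  congrArg ω (List.ofFn_inj.mp rfl)

theorem isAlt_toBilinForm (ω : V [⋀^Fin 2]→ₗ[K] K) : (toBilinForm ω).IsAlt := fun x ↦
  ω.map_eq_zero_of_eq ![x, x] (i := 0) (j := 1) rfl (by decide)

/-- The radical of an alternating 2-form: the vectors whose interior product with it vanishes. -/
def radical (ω : V [⋀^Fin 2]→ₗ[K] K) : Submodule K V :=
  LinearMap.ker (toBilinForm ω)

theorem radical_ne_bot_of_odd_finrank [FiniteDimensional K V] (ω : V [⋀^Fin 2]→ₗ[K] K)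
    (hodd : Odd (finrank K V)) : radical ω ≠ ⊥ := by
  intro hbot
  obtain ⟨k, -, -, hk⟩ := exists_isHyperbolicFamily (isAlt_toBilinForm ω)
  rw [← radical, hbot, finrank_bot, add_zero] at hk
  exact (Nat.not_odd_iff_even.mpr (even_two_mul k)) (hk ▸ hodd)

theorem finrank_radical_eq_one [FiniteDimensional K V] (ω : V [⋀^Fin 2]→ₗ[K] K)
    (hodd : Odd (finrank K V)) {η : Dual K V} (hη : ∀ x ∈ radical ω, η x = 0 → x = 0) :
    finrank K (radical ω) = 1 := by
  have hinj : Function.Injective (η.domRestrict (radical ω)) :=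
    (injective_iff_map_eq_zero _).mpr fun x hx ↦ Subtype.ext (hη x x.2 hx)
  refine le_antisymm ?_ (Submodule.one_le_finrank_iff.mpr (radical_ne_bot_of_odd_finrank ω hodd))
  simpa using LinearMap.finrank_le_finrank_of_injective hinj

-- Off the permutations of the blocks `{(i, 0), (i, 1)}` orthogonality kills the product; a
-- permutation of the blocks has as sign the product of the signs of its flips inside the blocks,
-- which cancels the sign that `ω` picks up.
theorem IsHyperbolicFamily.sign_smul_prod_apply {ω : V [⋀^Fin 2]→ₗ[K] K} {n : ℕ}
    {p : Fin n → Fin 2 → V} (hp : IsHyperbolicFamily (toBilinForm ω) p)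
    (σ : Perm (Fin n × Fin 2)) :
    Perm.sign σ • ∏ i, ω (fun c ↦ p.uncurry (σ (i, c))) =
      if ∀ i, (σ (i, 0)).1 = (σ (i, 1)).1 then ∏ i, ω (p i) else 0 := by
  split_ifs with h
  · obtain ⟨π, τ, rfl⟩ := exists_eq_prodCongrLeft_mul_prodCongrRight (σ := σ)
      fun i ↦ by simp [Fin.forall_fin_two, h i]
    have hflip (i : Fin n) : ω (fun c ↦ p (π i) (τ i c)) = Perm.sign (τ i) • ω (p (π i)) :=
      ω.map_perm _ _
    have hsign : Perm.sign (prodCongrLeft (fun _ : Fin 2 ↦ π) * prodCongrRight τ) =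
        ∏ i, Perm.sign (τ i) := by
      simp [Perm.sign_prodCongrLeft, Perm.sign_prodCongrRight]
    simp only [hsign, Perm.mul_apply, prodCongrRight_apply, prodCongrLeft_apply,
      Function.uncurry_apply_pair, hflip]
    rw [Finset.prod_smul, smul_smul, Int.units_mul_self, one_smul]
    exact prod_comp π fun i ↦ ω (p i)
  · obtain ⟨i, hi⟩ := not_forall.mp h
    rw [Finset.prod_eq_zero (Finset.mem_univ i), smul_zero]
    rw [← toBilinForm_apply_apply]
    exact hp.apply_eq_zero hi _ _

theorem IsHyperbolicFamily.sum_sign_smul_prod_ne_zero [CharZero K] {ω : V [⋀^Fin 2]→ₗ[K] K}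
    {n : ℕ} {p : Fin n → Fin 2 → V} (hp : IsHyperbolicFamily (toBilinForm ω) p) :
    ∑ σ : Perm (Fin n × Fin 2), Perm.sign σ • ∏ i, ω (fun c ↦ p.uncurry (σ (i, c))) ≠ 0 := by
  rw [Finset.sum_congr rfl fun σ _ ↦ hp.sign_smul_prod_apply σ, ← Finset.sum_filter,
    Finset.sum_const, nsmul_eq_mul]
  refine mul_ne_zero (Nat.cast_ne_zero.mpr (Finset.card_ne_zero_of_mem (a := 1) ?_)) ?_
  · simp
  · exact Finset.prod_ne_zero_iff.mpr fun i _ ↦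
      toBilinForm_apply_apply ω (p i) ▸ hp.apply_ne_zero i

end TwoForm

section Wedge

open Equiv Module

variable {K V : Type*} [Field K] [AddCommGroup V] [Module K V]
variable {L : Type*} [LieRing L] [LieAlgebra ℝ L] {a b : ℕ}

/-- The product of scalar-valued multilinear maps in disjoint sets of variables. -/
def tensorMul (f : MultilinearMap K (fun _ : Fin a ↦ V) K)
    (g : MultilinearMap K (fun _ : Fin b ↦ V) K) : MultilinearMap K (fun _ : Fin (a + b) ↦ V) K :=
  ((TensorProduct.lid K K).toLinearMap.compMultilinearMap (f.domCoprod g)).domDomCongr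
    finSumFinEquiv

theorem tensorMul_apply (f : MultilinearMap K (fun _ : Fin a ↦ V) K)
    (g : MultilinearMap K (fun _ : Fin b ↦ V) K) (v : Fin (a + b) → V) :
    tensorMul f g v = f (fun i ↦ v (Fin.castAdd b i)) * g (fun j ↦ v (Fin.natAdd a j)) := by
  simp [tensorMul]

theorem wedge_alternatization (f : MultilinearMap ℝ (fun _ : Fin a ↦ L) ℝ)
    (g : MultilinearMap ℝ (fun _ : Fin b ↦ L) ℝ) :
    wedge (MultilinearMap.alternatization f) (MultilinearMap.alternatization g) =
      MultilinearMap.alternatization (tensorMul f g) := by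
  ext v
  simp only [wedge, ← MultilinearMap.domCoprod_alternization, AlternatingMap.domDomCongr_apply,
    LinearMap.compAlternatingMap_apply, MultilinearMap.alternatization_apply, map_sum]
  refine Fintype.sum_equiv finSumFinEquiv.permCongr _ _ fun σ ↦ ?_
  simp [tensorMul]

theorem wedge_smul_smul (c d : ℝ) (f : L [⋀^Fin a]→ₗ[ℝ] ℝ) (g : L [⋀^Fin b]→ₗ[ℝ] ℝ) :
    wedge (c • f) (d • g) = (c * d) • wedge f g := by
  ext v
  simp only [wedge, ← AlternatingMap.domCoprod'_apply, TensorProduct.smul_tmul_smul, map_smul]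
  simp

/-- One summand, indexed by a permutation, of the shuffle sum that defines the wedge product. -/
def wedgeSummand (f : L [⋀^Fin a]→ₗ[ℝ] ℝ) (g : L [⋀^Fin b]→ₗ[ℝ] ℝ) (v : Fin (a + b) → L)
    (s : Perm.ModSumCongr (Fin a) (Fin b)) : ℝ :=
  TensorProduct.lid ℝ ℝ (AlternatingMap.domCoprod.summand f g s (v ∘ finSumFinEquiv))

theorem wedge_apply (f : L [⋀^Fin a]→ₗ[ℝ] ℝ) (g : L [⋀^Fin b]→ₗ[ℝ] ℝ) (v : Fin (a + b) → L) :
    wedge f g v = ∑ s, wedgeSummand f g v s := by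
  simp [wedge, wedgeSummand, AlternatingMap.domCoprod_apply, Function.comp_def]

theorem wedgeSummand_mk (f : L [⋀^Fin a]→ₗ[ℝ] ℝ) (g : L [⋀^Fin b]→ₗ[ℝ] ℝ) (v : Fin (a + b) → L)
    (σ : Perm (Fin a ⊕ Fin b)) :
    wedgeSummand f g v (Quotient.mk'' σ) = Perm.sign σ •
      (f (fun i ↦ v (finSumFinEquiv (σ (.inl i)))) *
        g (fun j ↦ v (finSumFinEquiv (σ (.inr j))))) := by
  rw [wedgeSummand, AlternatingMap.domCoprod.summand_mk'', smul_apply,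
    Units.smul_def, map_zsmul, Units.smul_def]
  simp [MultilinearMap.domCoprod_apply]

/-- The interior product of `f` with `x` vanishes. It is stated through the arguments of `f`
because `AlternatingMap.curryLeft` needs a positive degree. -/
def IsHorizontal (x : V) (f : V [⋀^Fin a]→ₗ[K] K) : Prop :=
  ∀ ⦃v⦄ (i), v i = x → f v = 0

theorem IsHorizontal.wedge {x : L} {f : L [⋀^Fin a]→ₗ[ℝ] ℝ} {g : L [⋀^Fin b]→ₗ[ℝ] ℝ}
    (hf : IsHorizontal x f) (hg : IsHorizontal x g) : IsHorizontal x (wedge f g) := by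
  intro v i hi
  rw [wedge_apply]
  refine Finset.sum_eq_zero fun s _ ↦ ?_
  induction s using Quotient.inductionOn' with | _ σ
  rw [wedgeSummand_mk]
  rcases hj : σ.symm (finSumFinEquiv.symm i) with j | j
  · rw [hf j (by simp [← hj, hi]), zero_mul, smul_zero]
  · rw [hg j (by simp [← hj, hi]), mul_zero, smul_zero]

theorem IsHorizontal.pow2 {x : L} {ω : L [⋀^Fin 2]→ₗ[ℝ] ℝ} (hω : IsHorizontal x ω) :
    ∀ n, IsHorizontal x (pow2 ω n)
  | 0 => fun _ i ↦ i.elim0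
  | n + 1 => (hω.pow2 n).wedge hω

theorem isHorizontal_of_mem_radical {x : V} {ω : V [⋀^Fin 2]→ₗ[K] K} (hx : x ∈ radical ω) :
    IsHorizontal x ω := by
  intro v i hi
  rw [← toBilinForm_apply_apply]
  fin_cases i
  · exact hi ▸ congr($hx (v 1))
  · exact (isAlt_toBilinForm ω).isRefl _ _ (hi ▸ congr($hx (v 0)))

theorem IsHorizontal.eq_zero_of_finrank_eq [FiniteDimensional K V] (ha : finrank K V = a) {x : V}
    (hx : x ≠ 0) {f : V [⋀^Fin a]→ₗ[K] K} (hf : IsHorizontal x f) : f = 0 := by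
  have hli : LinearIndepOn K id {x} := .singleton hx
  let e := Basis.extend hli
  have := Module.Finite.finite_basis e
  have := Fintype.ofFinite (hli.extend (Set.subset_univ _))
  refine e.ext_alternating fun v hv ↦ ?_
  have hcard : Fintype.card (Fin a) = Fintype.card (hli.extend (Set.subset_univ _)) := by
    rw [← finrank_eq_card_basis e, ha, Fintype.card_fin]
  obtain ⟨i, hi⟩ := ((Fintype.bijective_iff_injective_and_card v).mpr ⟨hv, hcard⟩).surjective
    ⟨x, hli.subset_extend _ rfl⟩
  exact hf i (by simp [hi, e])

-- The identity is the only shuffle that feeds no `w j` to `f`.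
theorem wedge_append_apply {f : L [⋀^Fin a]→ₗ[ℝ] ℝ} {g : L [⋀^Fin b]→ₗ[ℝ] ℝ} {v : Fin a → L}
    {w : Fin b → L} (hf : ∀ j, IsHorizontal (w j) f) :
    wedge f g (Fin.append v w) = f v * g w := by
  rw [wedge_apply]
  refine (Finset.sum_eq_single (Quotient.mk'' 1) ?_ ?_).trans ?_
  · intro s _ hs
    induction s using Quotient.inductionOn' with | _ σ
    obtain ⟨i, j, hij⟩ : ∃ i j, σ (.inl i) = .inr j := by
      by_contra! h
      refine hs (Quotient.sound' (QuotientGroup.leftRel_apply.mpr ?_))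
      rw [mul_one, inv_mem_iff]
      refine Perm.mem_sumCongrHom_range_of_perm_mapsTo_inl ?_
      rintro _ ⟨i, rfl⟩
      rcases hi : σ (.inl i) with i' | j
      · exact ⟨i', rfl⟩
      · exact absurd hi (h i j)
    rw [wedgeSummand_mk, hf j i (by simp [hij]), zero_mul, smul_zero]
  · exact fun h ↦ absurd (Finset.mem_univ _) h
  · simp [wedgeSummand_mk]

theorem wedge_oneForm_ne_zero_s6 {f : L [⋀^Fin a]→ₗ[ℝ] ℝ} (hf : f ≠ 0) {η : Dual ℝ L} {z : L}
    (hz : IsHorizontal z f) (hηz : η z ≠ 0) : wedge f (oneForm η) ≠ 0 := by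
  obtain ⟨v, hv⟩ := DFunLike.exists_ne hf
  intro h
  have hval := wedge_append_apply (g := oneForm η) (v := v) (w := fun _ ↦ z) fun _ ↦ hz
  rw [h, AlternatingMap.zero_apply] at hval
  exact mul_ne_zero hv hηz hval.symm

/-- The `n`-th tensor power of a 2-form, which alternates to `2 ^ n` times its wedge power. -/
def tensorPow (ω : V [⋀^Fin 2]→ₗ[K] K) : (n : ℕ) → MultilinearMap K (fun _ : Fin (2 * n) ↦ V) K
  | 0 => MultilinearMap.constOfIsEmpty K (fun _ : Fin 0 ↦ V) 1
  | n + 1 => tensorMul (tensorPow ω n) (ω : MultilinearMap K (fun _ : Fin 2 ↦ V) K)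

theorem two_pow_smul_pow2 (ω : L [⋀^Fin 2]→ₗ[ℝ] ℝ) (n : ℕ) :
    (2 ^ n : ℝ) • pow2 ω n = MultilinearMap.alternatization (tensorPow ω n) := by
  induction n with
  | zero =>
    ext v
    simp [pow2, tensorPow, MultilinearMap.alternatization_apply]
  | succ n ih =>
    have hω : (2 : ℝ) • ω =
        MultilinearMap.alternatization (ω : MultilinearMap ℝ (fun _ : Fin 2 ↦ L) ℝ) := by
      rw [AlternatingMap.coe_alternatization, ← Nat.cast_smul_eq_nsmul ℝ]
      simp
    rw [pow_succ, pow2, ← wedge_smul_smul, ih, hω, wedge_alternatization, tensorPow]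

/-- The `2 n` arguments of an `n`-th power of a 2-form, grouped into `n` consecutive pairs. -/
def pairEquiv (n : ℕ) : Fin n × Fin 2 ≃ Fin (2 * n) :=
  finProdFinEquiv.trans (finCongr (mul_comm n 2))

theorem tensorPow_apply (ω : V [⋀^Fin 2]→ₗ[K] K) (n : ℕ) (v : Fin (2 * n) → V) :
    tensorPow ω n v = ∏ i, ω fun c ↦ v (pairEquiv n (i, c)) := by
  induction n with
  | zero => simp [tensorPow]
  | succ n ih =>
    have hcast (i : Fin n) (c : Fin 2) :
        pairEquiv (n + 1) (i.castSucc, c) = Fin.castAdd 2 (pairEquiv n (i, c)) := by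
      ext; simp [pairEquiv]
    have hlast (c : Fin 2) : pairEquiv (n + 1) (Fin.last n, c) = Fin.natAdd (2 * n) c := by
      ext; simp [pairEquiv, add_comm]
    simp only [Fin.prod_univ_castSucc, hcast, hlast]
    rw [← ih fun i ↦ v (Fin.castAdd 2 i)]
    exact tensorMul_apply _ _ v

theorem two_pow_mul_pow2_apply (ω : L [⋀^Fin 2]→ₗ[ℝ] ℝ) {n : ℕ} (u : Fin n × Fin 2 → L) :
    2 ^ n * pow2 ω n (u ∘ (pairEquiv n).symm) =
      ∑ σ : Perm (Fin n × Fin 2), Perm.sign σ • ∏ i, ω fun c ↦ u (σ (i, c)) := by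
  rw [← smul_eq_mul, ← AlternatingMap.smul_apply, two_pow_smul_pow2,
    MultilinearMap.alternatization_apply]
  refine (Fintype.sum_equiv (pairEquiv n).permCongr _ _ fun σ ↦ ?_).symm
  simp [Perm.sign_permCongr, tensorPow_apply]

theorem IsHyperbolicFamily.pow2_ne_zero {ω : L [⋀^Fin 2]→ₗ[ℝ] ℝ} {n : ℕ} {p : Fin n → Fin 2 → L}
    (hp : IsHyperbolicFamily (toBilinForm ω) p) : pow2 ω n ≠ 0 := by
  intro h
  refine hp.sum_sign_smul_prod_ne_zero ?_
  rw [← two_pow_mul_pow2_apply, h, AlternatingMap.zero_apply, mul_zero]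

variable [FiniteDimensional ℝ L]

theorem pow2_ne_zero_of_finrank_eq {ω : L [⋀^Fin 2]→ₗ[ℝ] ℝ} {n : ℕ}
    (hn : finrank ℝ L = 2 * n + finrank ℝ (radical ω)) : pow2 ω n ≠ 0 := by
  obtain ⟨k, p, hp, hk⟩ := exists_isHyperbolicFamily (isAlt_toBilinForm ω)
  obtain rfl : k = n := by
    rw [radical] at hn
    omega
  exact hp.pow2_ne_zero

theorem pow2_ne_zero_iff {ω : L [⋀^Fin 2]→ₗ[ℝ] ℝ} {n : ℕ} (hn : finrank ℝ L = 2 * n) :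
    pow2 ω n ≠ 0 ↔ radical ω = ⊥ := by
  refine ⟨fun h ↦ (Submodule.eq_bot_iff _).mpr fun x hx ↦ ?_, fun h ↦ ?_⟩
  · by_contra hx0
    exact h (((isHorizontal_of_mem_radical hx).pow2 n).eq_zero_of_finrank_eq hn hx0)
  · exact pow2_ne_zero_of_finrank_eq (by rw [h, finrank_bot, hn, add_zero])

theorem wedge_pow2_oneForm_ne_zero_iff {ω : L [⋀^Fin 2]→ₗ[ℝ] ℝ} {η : Dual ℝ L} {n : ℕ}
    (hn : finrank ℝ L = 2 * n + 1) :
    wedge (pow2 ω n) (oneForm η) ≠ 0 ↔ ∀ x ∈ radical ω, η x = 0 → x = 0 := by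
  constructor
  · intro h x hx hηx
    by_contra hx0
    have hη : IsHorizontal x (oneForm η) := fun v i hi ↦ by
      rw [Subsingleton.elim i 0] at hi
      simp [oneForm, hi, hηx]
    exact h ((((isHorizontal_of_mem_radical hx).pow2 n).wedge hη).eq_zero_of_finrank_eq hn hx0)
  · intro h
    obtain ⟨z, hz, hz0⟩ :=
      Submodule.exists_mem_ne_zero_of_ne_bot (radical_ne_bot_of_odd_finrank ω ⟨n, hn⟩)
    have hpow : pow2 ω n ≠ 0 :=
      pow2_ne_zero_of_finrank_eq (by rw [finrank_radical_eq_one ω ⟨n, hn⟩ h, hn])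
    exact wedge_oneForm_ne_zero_s6 hpow ((isHorizontal_of_mem_radical hz).pow2 n)
      fun hηz ↦ hz0 (h z hz hηz)

end Wedge

section LieAlgebra

open Module

variable {L : Type*} [LieRing L] [LieAlgebra ℝ L]

theorem mem_radical_dee {η : Dual ℝ L} {x : L} : x ∈ radical (dee η) ↔ ∀ y, η ⁅x, y⁆ = 0 := by
  simp [radical, LinearMap.ext_iff, toBilinForm_apply, dee]

variable [FiniteDimensional ℝ L] {n : ℕ}

theorem isExactSymplectic_iff (hn : finrank ℝ L = 2 * n) (α : Dual ℝ L) :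
    IsExactSymplectic n α ↔ radical (dee α) = ⊥ :=
  (and_iff_right hn).trans (pow2_ne_zero_iff hn)

theorem isContact_iff (hn : finrank ℝ L = 2 * n + 1) (η : Dual ℝ L) :
    IsContact n η ↔ ∀ x ∈ radical (dee η), η x = 0 → x = 0 :=
  (and_iff_right hn).trans (wedge_pow2_oneForm_ne_zero_iff hn)

end LieAlgebra

section Decomposition

open Module

variable {G : Type*} [LieRing G] [LieAlgebra ℝ G]

/-- The restriction of a linear form to a Lie subalgebra. -/
def restrict (A : LieSubalgebra ℝ G) (η : Dual ℝ G) : Dual ℝ A :=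
  η ∘ₗ (A.incl : A →ₗ[ℝ] G)

theorem restrict_apply (A : LieSubalgebra ℝ G) (η : Dual ℝ G) (x : A) : restrict A η x = η x := rfl

variable {A₁ A₂ : LieSubalgebra ℝ G}

theorem exists_restrict_eq (hcompl : IsCompl A₁.toSubmodule A₂.toSubmodule) (β : Dual ℝ A₁)
    (α : Dual ℝ A₂) : ∃ η : Dual ℝ G, restrict A₁ η = β ∧ restrict A₂ η = α :=
  ⟨LinearMap.ofIsCompl hcompl β α, LinearMap.ext (LinearMap.ofIsCompl_apply_left hcompl),
    LinearMap.ext (LinearMap.ofIsCompl_apply_right hcompl)⟩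

theorem add_lie_add_of_disjoint (h₁ : ∀ x : G, ∀ y ∈ A₁, ⁅x, y⁆ ∈ A₁)
    (h₂ : ∀ x : G, ∀ y ∈ A₂, ⁅x, y⁆ ∈ A₂) (hdisj : Disjoint A₁.toSubmodule A₂.toSubmodule)
    (x₁ y₁ : A₁) (x₂ y₂ : A₂) :
    ⁅(x₁ + x₂ : G), (y₁ + y₂ : G)⁆ = ⁅(x₁ : G), (y₁ : G)⁆ + ⁅(x₂ : G), (y₂ : G)⁆ := by
  have hzero (z₁ : A₁) (z₂ : A₂) : ⁅(z₁ : G), (z₂ : G)⁆ = 0 := by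
    refine Submodule.disjoint_def.mp hdisj _ ?_ (h₂ z₁ z₂ z₂.2)
    rw [← lie_skew]
    exact neg_mem (h₁ z₂ z₁ z₁.2)
  rw [add_lie, lie_add, lie_add, hzero x₁ y₂, ← lie_skew (x₂ : G) (y₁ : G), hzero y₁ x₂, neg_zero,
    add_zero, zero_add]

theorem add_mem_radical_dee_iff (h₁ : ∀ x : G, ∀ y ∈ A₁, ⁅x, y⁆ ∈ A₁)
    (h₂ : ∀ x : G, ∀ y ∈ A₂, ⁅x, y⁆ ∈ A₂) (hcompl : IsCompl A₁.toSubmodule A₂.toSubmodule)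
    {η : Dual ℝ G} {x₁ : A₁} {x₂ : A₂} :
    (x₁ + x₂ : G) ∈ radical (dee η) ↔
      x₁ ∈ radical (dee (restrict A₁ η)) ∧ x₂ ∈ radical (dee (restrict A₂ η)) := by
  have hlie := add_lie_add_of_disjoint h₁ h₂ hcompl.disjoint x₁
  simp only [mem_radical_dee, restrict_apply, LieSubalgebra.coe_bracket]
  refine ⟨fun h ↦ ⟨fun y₁ ↦ ?_, fun y₂ ↦ ?_⟩, fun ⟨hx₁, hx₂⟩ y ↦ ?_⟩
  · have := h (y₁ + (0 : A₂))
    rw [hlie y₁ x₂ 0] at this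
    simpa using this
  · have := h ((0 : A₁) + y₂)
    rw [hlie 0 x₂ y₂] at this
    simpa using this
  · obtain ⟨y₁, y₂, hy₁, hy₂, rfl⟩ :=
      Submodule.codisjoint_iff_exists_add_eq.mp hcompl.codisjoint y
    rw [hlie ⟨y₁, hy₁⟩ x₂ ⟨y₂, hy₂⟩, map_add, hx₁, hx₂, add_zero]

variable [FiniteDimensional ℝ G]

theorem isContact_add_iff (h₁ : ∀ x : G, ∀ y ∈ A₁, ⁅x, y⁆ ∈ A₁)
    (h₂ : ∀ x : G, ∀ y ∈ A₂, ⁅x, y⁆ ∈ A₂) (hcompl : IsCompl A₁.toSubmodule A₂.toSubmodule)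
    {k m : ℕ} (hk : finrank ℝ A₁ = 2 * k + 1) (hm : finrank ℝ A₂ = 2 * m) {η : Dual ℝ G} :
    IsContact (k + m) η ↔ IsContact k (restrict A₁ η) ∧ IsExactSymplectic m (restrict A₂ η) := by
  have hdim : finrank ℝ A₁ + finrank ℝ A₂ = finrank ℝ G :=
    Submodule.finrank_add_eq_of_isCompl hcompl
  have hrad {x₁ : A₁} {x₂ : A₂} :=
    add_mem_radical_dee_iff h₁ h₂ hcompl (η := η) (x₁ := x₁) (x₂ := x₂)
  rw [isContact_iff (by omega), isContact_iff hk, isExactSymplectic_iff hm]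
  constructor
  · intro h
    have hsum {x₁ : A₁} {x₂ : A₂} (hx₁ : x₁ ∈ radical (dee (restrict A₁ η)))
        (hx₂ : x₂ ∈ radical (dee (restrict A₂ η))) (hη : η (x₁ + x₂) = 0) : x₁ = 0 ∧ x₂ = 0 := by
      have := Submodule.disjoint_iff_add_eq_zero.mp hcompl.disjoint x₁.2 x₂.2
        (h _ (hrad.mpr ⟨hx₁, hx₂⟩) hη)
      exact ⟨Subtype.ext this.1, Subtype.ext this.2⟩
    have hA₁ : ∀ x ∈ radical (dee (restrict A₁ η)), restrict A₁ η x = 0 → x = 0 := fun x hx hηx ↦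
      (hsum hx (zero_mem _) (by simpa [restrict_apply] using hηx)).1
    refine ⟨hA₁, (Submodule.eq_bot_iff _).mpr fun x hx ↦ ?_⟩
    obtain ⟨z, hz, hz0⟩ := Submodule.exists_mem_ne_zero_of_ne_bot
      (radical_ne_bot_of_odd_finrank (dee (restrict A₁ η)) ⟨k, hk⟩)
    have hηz : η z ≠ 0 := fun h0 ↦ hz0 (hA₁ z hz h0)
    exact (hsum (Submodule.smul_mem _ (-(η x / η z)) hz) hx (by simp [hηz])).2
  · rintro ⟨hA₁, hA₂⟩ x hx hηx
    obtain ⟨x₁, x₂, hx₁, hx₂, rfl⟩ :=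
      Submodule.codisjoint_iff_exists_add_eq.mp hcompl.codisjoint x
    obtain ⟨hr₁, hr₂⟩ := hrad (x₁ := ⟨x₁, hx₁⟩) (x₂ := ⟨x₂, hx₂⟩) |>.mp hx
    obtain rfl : x₂ = 0 := congrArg Subtype.val ((Submodule.eq_bot_iff _).mp hA₂ _ hr₂)
    rw [add_zero] at hηx ⊢
    exact congrArg Subtype.val (hA₁ _ hr₁ hηx)

end Decomposition

/-- A decomposable Lie algebra `𝔤 = 𝒜₁ ⊕ 𝒜₂` (direct sum of two nonzero
ideals) of odd dimension admits a contact form iff one of the two ideals admits a contact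
form and the other admits an exact symplectic form. -/
theorem decomposable_contact_iff
    {G : Type*} [LieRing G] [LieAlgebra ℝ G] [FiniteDimensional ℝ G]
    (hodd : Odd (Module.finrank ℝ G))
    (A₁ A₂ : LieSubalgebra ℝ G)
    (h₁ : ∀ x : G, ∀ y ∈ A₁, ⁅x, y⁆ ∈ A₁) (h₂ : ∀ x : G, ∀ y ∈ A₂, ⁅x, y⁆ ∈ A₂)
    (hA₁ : A₁ ≠ ⊥) (hA₂ : A₂ ≠ ⊥)
    (hcompl : IsCompl A₁.toSubmodule A₂.toSubmodule) :
    (∃ (n : ℕ) (η : Module.Dual ℝ G), IsContact n η) ↔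
      ((∃ (k : ℕ) (η : Module.Dual ℝ ↥A₁), IsContact k η) ∧
          (∃ (m : ℕ) (α : Module.Dual ℝ ↥A₂), IsExactSymplectic m α)) ∨
        ((∃ (k : ℕ) (η : Module.Dual ℝ ↥A₂), IsContact k η) ∧
          (∃ (m : ℕ) (α : Module.Dual ℝ ↥A₁), IsExactSymplectic m α)) := by
  have hdim : Module.finrank ℝ A₁ + Module.finrank ℝ A₂ = Module.finrank ℝ G :=
    Submodule.finrank_add_eq_of_isCompl hcompl
  constructor
  · rintro ⟨n, η, hη⟩
    have hn := hη.1
    rcases Nat.even_or_odd' (Module.finrank ℝ A₁) with ⟨k, hk | hk⟩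
    · obtain ⟨m, rfl⟩ : ∃ m, n = m + k := ⟨n - k, by omega⟩
      have hη' := (isContact_add_iff h₂ h₁ hcompl.symm (by omega) hk).mp hη
      exact .inr ⟨⟨m, _, hη'.1⟩, k, _, hη'.2⟩
    · obtain ⟨m, rfl⟩ : ∃ m, n = k + m := ⟨n - k, by omega⟩
      have hη' := (isContact_add_iff h₁ h₂ hcompl hk (by omega)).mp hη
      exact .inl ⟨⟨k, _, hη'.1⟩, m, _, hη'.2⟩
  · rintro (⟨⟨k, β, hβ⟩, m, α, hα⟩ | ⟨⟨k, β, hβ⟩, m, α, hα⟩)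
    · obtain ⟨η, rfl, rfl⟩ := exists_restrict_eq hcompl β α
      exact ⟨k + m, η, (isContact_add_iff h₁ h₂ hcompl hβ.1 hα.1).mpr ⟨hβ, hα⟩⟩
    · obtain ⟨η, rfl, rfl⟩ := exists_restrict_eq hcompl.symm β α
      exact ⟨k + m, η, (isContact_add_iff h₂ h₁ hcompl.symm hβ.1 hα.1).mpr ⟨hβ, hα⟩⟩

end ContactLie
end
end

section
/- Every 3-dimensional nonabelian real Lie algebra admits a contact form, except the Lie algebra ℝ² ⋊ ℝ·id, i.e., the semidirect product of the abelian ideal ℝ² and a line ℝe₁ acting on ℝ² by the identity map (equivalently, the Lie algebra with bracket [x, y] = l(y)x − l(x)y for a nonzero linear form l); this exceptional Lie algebra admits no contact form. -/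
set_option maxHeartbeats 1000000
set_option maxRecDepth 8000

noncomputable section

namespace ContactLie

/-!
Evaluating `∂η ∧ η` on vectors shows that it vanishes iff `ker η` is a subalgebra (the Frobenius
integrability condition). So a 3-dimensional Lie algebra has no contact form iff every hyperplane
is a subalgebra, and, intersecting the hyperplanes containing `x` and `y`, iff `⁅x, y⁆` always lies
in the span of `x` and `y`. Then each `ad x` acts on `L ⧸ span {x}` as a homothety. Subtracting a
bracket `l y • x - l x • y` we may assume that `ad e = 0` for some `e ≠ 0`; the homotheties then
vanish, so `⁅x, y⁆` is a multiple of both `x` and `y`, and the bracket is zero.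
-/

section LinearAlgebra

open Submodule

variable {K V : Type*} [Field K] [AddCommGroup V] [Module K V]

theorem exists_forall_sub_smul_mem_span_singleton (f : Module.End K V) (x : V)
    (hf : ∀ y, f y ∈ span K {x, y}) : ∃ c : K, ∀ y, f y - c • y ∈ span K {x} := by
  have hx : span K {x} ≤ (span K {x}).comap f := by
    simpa [span_le] using hf x
  have hcol : ∀ v, ¬ LinearIndependent K ![v, (span K {x}).mapQ (span K {x}) f hx v] := by
    intro v hv
    obtain ⟨y, rfl⟩ := (span K {x}).mkQ_surjective v
    obtain ⟨a, b, hab⟩ := mem_span_pair.mp (hf y)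
    have hfy : b • (span K {x}).mkQ y + (-1 : K) • (span K {x}).mkQ (f y) = 0 := by
      have hx0 : (span K {x}).mkQ x = 0 := by simp
      rw [← hab, map_add, map_smul, map_smul, hx0]
      module
    exact one_ne_zero (neg_eq_zero.mp (LinearIndependent.pair_iff.mp hv _ _ hfy).2)
  obtain ⟨c, hc⟩ := LinearMap.exists_eq_smul_id_of_forall_notLinearIndependent hcol
  refine ⟨c, fun y => (Submodule.Quotient.mk_eq_zero _).mp ?_⟩
  simpa [sub_eq_zero] using LinearMap.congr_fun hc (Submodule.Quotient.mk y)

theorem eq_zero_of_isAlt_of_mem_span_pair {B : V →ₗ[K] Module.End K V} (hB : B.IsAlt)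
    (hspan : ∀ x y, B x y ∈ span K {x, y}) {e : V} (he : e ≠ 0) (hBe : B e = 0) : B = 0 := by
  have hmem : ∀ x y, B x y ∈ span K {x} := by
    intro x y
    obtain ⟨c, hc⟩ := exists_forall_sub_smul_mem_span_singleton (B x) x (hspan x)
    by_cases hex : e ∈ span K {x}
    · obtain ⟨a, rfl⟩ := mem_span_singleton.mp hex
      have ha : a ≠ 0 := left_ne_zero_of_smul he
      have hBx : B x = 0 := by simpa [ha] using hBe
      simp [hBx]
    · have hBxe : B x e = 0 := by rw [← hB.neg, hBe, LinearMap.zero_apply, neg_zero]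
      have hce : c • e ∈ span K {x} := by simpa [hBxe] using hc e
      have hc0 : c = 0 := by
        by_contra hne
        exact hex ((smul_mem_iff _ hne).mp hce)
      simpa [hc0] using hc y
  refine LinearMap.ext₂ fun x y => ?_
  obtain ⟨a, ha⟩ := mem_span_singleton.mp (hmem x y)
  obtain ⟨b, hb⟩ := mem_span_singleton.mp (hmem y x)
  have hax : a • x = -(b • y) := by rw [ha, hb, hB.neg]
  have haB : a • B x y = 0 := by
    rw [← LinearMap.smul_apply, ← map_smul, hax]
    simp [hB y]
  rcases smul_eq_zero.mp haB with ha0 | hBxy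
  · simpa [ha0] using ha.symm
  · exact hBxy

theorem exists_dual_forall_apply_eq_of_mem_span_pair {B : V →ₗ[K] Module.End K V} (hB : B.IsAlt)
    (hspan : ∀ x y, B x y ∈ span K {x, y}) :
    ∃ l : Module.Dual K V, ∀ x y, B x y = l y • x - l x • y := by
  rcases subsingleton_or_nontrivial V with hV | hV
  · exact ⟨0, fun x y => Subsingleton.elim _ _⟩
  obtain ⟨e, he⟩ := exists_ne (0 : V)
  obtain ⟨g, hg⟩ := Module.Projective.exists_dual_eq_one K he
  obtain ⟨c, hc⟩ := exists_forall_sub_smul_mem_span_singleton (B e) e (hspan e)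
  -- `l y` is the coefficient of `e` in `B e y = c • y + l y • e`.
  let l : Module.Dual K V := g ∘ₗ (B e - c • LinearMap.id)
  let D : V →ₗ[K] Module.End K V := (LinearMap.lsmul K V ∘ₗ l).flip - LinearMap.lsmul K V ∘ₗ l
  have hD : ∀ x y, D x y = l y • x - l x • y := fun x y => rfl
  have hBe : ∀ y, B e y = D e y := by
    intro y
    obtain ⟨m, hm⟩ := mem_span_singleton.mp (hc y)
    have hly : l y = m := by simp [l, ← hm, hg]
    have hle : l e = -c := by simp [l, hB e, hg]
    rw [hD, hly, hle, hm]
    module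
  have hBD : B - D = 0 := by
    refine eq_zero_of_isAlt_of_mem_span_pair (fun x => ?_) (fun x y => ?_) he ?_
    · simp [hB x, hD]
    · exact sub_mem (hspan x y) (mem_span_pair.mpr ⟨l y, -l x, by rw [hD]; module⟩)
    · exact LinearMap.ext fun y => sub_eq_zero.mpr (hBe y)
  exact ⟨l, fun x y => by rw [sub_eq_zero.mp hBD, hD]⟩

end LinearAlgebra

section LieAlgebra

open Submodule

variable {K L : Type*} [Field K] [LieRing L] [LieAlgebra K L]

theorem forall_lie_mem_span_pair_iff :
    (∀ x y : L, ⁅x, y⁆ ∈ span K {x, y}) ↔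
      ∃ l : Module.Dual K L, ∀ x y : L, ⁅x, y⁆ = l y • x - l x • y := by
  refine ⟨fun h => ?_, ?_⟩
  · exact exists_dual_forall_apply_eq_of_mem_span_pair
      (B := (LieModule.toEnd K L L : L →ₗ[K] Module.End K L)) lie_self h
  · rintro ⟨l, hl⟩ x y
    exact mem_span_pair.mpr ⟨l y, -l x, by rw [hl]; module⟩

theorem forall_lie_mem_ker_iff_forall_lie_mem_span_pair :
    (∀ η : Module.Dual K L, ∀ x ∈ η.ker, ∀ y ∈ η.ker, ⁅x, y⁆ ∈ η.ker) ↔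
      ∀ x y : L, ⁅x, y⁆ ∈ span K {x, y} := by
  refine ⟨fun h x y => ?_, fun h η x hx y hy => ?_⟩
  · by_contra hxy
    obtain ⟨η, hη, hker⟩ := exists_le_ker_of_notMem hxy
    exact hη (h η x (hker (subset_span (by simp))) y (hker (subset_span (by simp))))
  · exact span_le.mpr (Set.pair_subset hx hy) (h x y)

end LieAlgebra

section Forms

variable {L : Type*} [LieRing L] [LieAlgebra ℝ L]

theorem factorial_mul_wedge_apply {a b : ℕ} (f : L [⋀^Fin a]→ₗ[ℝ] ℝ) (g : L [⋀^Fin b]→ₗ[ℝ] ℝ)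
    (v : Fin (a + b) → L) :
    (a.factorial * b.factorial : ℝ) * wedge f g v = ∑ σ : Equiv.Perm (Fin (a + b)),
      (Equiv.Perm.sign σ : ℤ) *
        (f (fun i => v (σ (Fin.castAdd b i))) * g (fun i => v (σ (Fin.natAdd a i)))) := by
  -- The sum over all permutations counts each shuffle `a! * b!` times.
  have h := congrArg (fun F => TensorProduct.lid ℝ ℝ (F (v ∘ finSumFinEquiv)))
    (MultilinearMap.domCoprod_alternization_eq f g)
  simp only [MultilinearMap.alternatization_apply, AlternatingMap.smul_apply, map_nsmul, map_sum,
    Fintype.card_fin] at h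
  rw [nsmul_eq_mul, Nat.cast_mul] at h
  refine Eq.trans h.symm ?_
  refine Fintype.sum_equiv finSumFinEquiv.permCongr _ _ fun σ => ?_
  rw [Equiv.Perm.sign_permCongr]
  rcases Int.units_eq_one_or (Equiv.Perm.sign σ) with hs | hs <;>
    simp [hs, Equiv.permCongr_apply]

theorem pow2_one (ω : L [⋀^Fin 2]→ₗ[ℝ] ℝ) : pow2 ω 1 = ω := by
  refine AlternatingMap.ext fun v => ?_
  have hterm : ∀ σ : Equiv.Perm (Fin 2), (Equiv.Perm.sign σ : ℤ) * (1 * ω (v ∘ σ)) = ω v := by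
    intro σ
    rw [ω.map_perm]
    rcases Int.units_eq_one_or (Equiv.Perm.sign σ) with hσ | hσ <;> simp [hσ]
  have hcomp : ∀ σ : Equiv.Perm (Fin 2),
      (fun i : Fin 2 => v (σ (Fin.natAdd 0 i))) = v ∘ σ := by
    intro σ
    simp only [Fin.natAdd_zero]
    rfl
  have hsum : (Nat.factorial 0 * Nat.factorial 2 : ℝ) * pow2 ω 1 v =
      ∑ _σ : Equiv.Perm (Fin 2), ω v :=
    calc _ = ∑ σ : Equiv.Perm (Fin 2), (Equiv.Perm.sign σ : ℤ) *
          (1 * ω (fun i => v (σ (Fin.natAdd 0 i)))) := factorial_mul_wedge_apply (pow2 ω 0) ω v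
      _ = _ := Fintype.sum_congr _ _ fun σ => by rw [hcomp, hterm]
  simpa [Fintype.card_perm] using hsum

theorem sum_sign_mul_perm_fin_three {R : Type*} [Ring R] (F : Fin 3 → Fin 3 → Fin 3 → R) :
    ∑ σ : Equiv.Perm (Fin 3), (Equiv.Perm.sign σ : ℤ) * F (σ 0) (σ 1) (σ 2) =
      F 0 1 2 - F 0 2 1 - F 1 0 2 + F 1 2 0 - F 2 1 0 + F 2 0 1 := by
  have h0 : Equiv.Perm.decomposeFin.symm (0, Equiv.swap (0 : Fin 2) 1) 2 = 1 := by decide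
  have h1 : Equiv.Perm.decomposeFin.symm (1, Equiv.swap (0 : Fin 2) 1) 2 = 0 := by decide
  have h2 : Equiv.Perm.decomposeFin.symm (2, Equiv.swap (0 : Fin 2) 1) 2 = 1 := by decide
  have h01 : Equiv.swap (0 : Fin 3) 1 2 = 2 := by decide
  have h02 : Equiv.swap (0 : Fin 3) 2 1 = 1 := by decide
  simp [Finset.univ_perm_fin_succ, ← Finset.univ_product_univ, Finset.sum_product,
    Fin.sum_univ_succ, h0, h1, h2, h01, h02, sub_eq_add_neg, add_assoc]

theorem wedge_apply_two_one (ω : L [⋀^Fin 2]→ₗ[ℝ] ℝ) (α : L [⋀^Fin 1]→ₗ[ℝ] ℝ) (v : Fin 3 → L) :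
    wedge ω α v =
      ω ![v 0, v 1] * α ![v 2] + ω ![v 1, v 2] * α ![v 0] + ω ![v 2, v 0] * α ![v 1] := by
  have hω : ∀ x y, ω ![x, y] = -ω ![y, x] := by
    intro x y
    rw [← ω.map_swap ![y, x] zero_ne_one]
    congr 1
    ext i
    fin_cases i <;> rfl
  have hterm : ∀ σ : Equiv.Perm (Fin 3),
      ω (fun i => v (σ (Fin.castAdd 1 i))) * α (fun i => v (σ (Fin.natAdd 2 i))) =
        ω ![v (σ 0), v (σ 1)] * α ![v (σ 2)] := by
    intro σ
    congr 2 <;> ext i <;> fin_cases i <;> rfl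
  have h := factorial_mul_wedge_apply ω α v
  simp only [hterm, sum_sign_mul_perm_fin_three (fun i j k => ω ![v i, v j] * α ![v k])] at h
  rw [hω (v 1) (v 0), hω (v 2) (v 1), hω (v 0) (v 2), Nat.factorial_two, Nat.factorial_one] at h
  push_cast at h
  linarith

theorem wedge_dee_oneForm_apply (η : Module.Dual ℝ L) (v : Fin 3 → L) :
    wedge (pow2 (dee η) 1) (oneForm η) v =
      -(η ⁅v 0, v 1⁆ * η (v 2) + η ⁅v 1, v 2⁆ * η (v 0) + η ⁅v 2, v 0⁆ * η (v 1)) := by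
  rw [pow2_one, wedge_apply_two_one]
  have hdee : ∀ x y, dee η ![x, y] = -η ⁅x, y⁆ := fun _ _ => rfl
  have hone : ∀ x, oneForm η ![x] = η x := fun _ => rfl
  simp only [hdee, hone]
  ring

theorem wedge_dee_oneForm_eq_zero_iff (η : Module.Dual ℝ L) :
    wedge (pow2 (dee η) 1) (oneForm η) = 0 ↔ ∀ x ∈ η.ker, ∀ y ∈ η.ker, ⁅x, y⁆ ∈ η.ker := by
  refine ⟨fun h x hx y hy => ?_, fun h => AlternatingMap.ext fun v => ?_⟩
  · have hxy := wedge_dee_oneForm_apply η ![x, y, ⁅x, y⁆]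
    rw [LinearMap.mem_ker] at hx hy
    simpa [h, hx, hy] using hxy
  · rw [wedge_dee_oneForm_apply, AlternatingMap.zero_apply]
    rcases eq_or_ne η 0 with rfl | hη
    · simp
    obtain ⟨e, he⟩ := LinearMap.surjective hη 1
    have hproj : ∀ x, x - η x • e ∈ η.ker := fun x => by simp [he]
    have hdecomp : ∀ x y, η ⁅x, y⁆ = η x * η ⁅e, y⁆ - η y * η ⁅e, x⁆ := by
      intro x y
      have hxy := h _ (hproj x) _ (hproj y)
      simp only [LinearMap.mem_ker, sub_lie, lie_sub, smul_lie, lie_smul, lie_self, map_sub,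
        map_smul, map_zero, smul_eq_mul, ← lie_skew e x, map_neg] at hxy ⊢
      linarith
    rw [hdecomp (v 0), hdecomp (v 1), hdecomp (v 2)]
    ring

theorem isContact_one_iff_of_finrank_eq_three (hdim : Module.finrank ℝ L = 3)
    (η : Module.Dual ℝ L) :
    IsContact 1 η ↔ ¬ ∀ x ∈ η.ker, ∀ y ∈ η.ker, ⁅x, y⁆ ∈ η.ker := by
  rw [IsContact, hdim, ne_eq, wedge_dee_oneForm_eq_zero_iff]
  simp only [Nat.reduceMul, Nat.reduceAdd, true_and]

theorem exists_isContact_one_iff_of_finrank_eq_three (hdim : Module.finrank ℝ L = 3) :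
    (∃ η : Module.Dual ℝ L, IsContact 1 η) ↔
      ¬ ∃ l : Module.Dual ℝ L, ∀ x y : L, ⁅x, y⁆ = l y • x - l x • y := by
  simp only [isContact_one_iff_of_finrank_eq_three hdim, ← not_forall,
    forall_lie_mem_ker_iff_forall_lie_mem_span_pair, forall_lie_mem_span_pair_iff]

end Forms

/-- **Proposition 4.1.** A 3-dimensional nonabelian real Lie algebra admits a
contact form iff it is not the Lie algebra `ℝ² ⋊ ℝ id`, i.e. iff its bracket is not of the
form `⁅x, y⁆ = l y • x - l x • y` for a nonzero linear form `l`. -/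
theorem three_dim_contact_iff
    {G : Type*} [LieRing G] [LieAlgebra ℝ G]
    (hdim : Module.finrank ℝ G = 3) (hnonab : ¬ ∀ x y : G, ⁅x, y⁆ = 0) :
    (∃ η : Module.Dual ℝ G, IsContact 1 η) ↔
      ¬ ∃ l : Module.Dual ℝ G, l ≠ 0 ∧ ∀ x y : G, ⁅x, y⁆ = l y • x - l x • y := by
  rw [exists_isContact_one_iff_of_finrank_eq_three hdim, not_iff_not]
  refine ⟨fun ⟨l, hl⟩ => ⟨l, ?_, hl⟩, fun ⟨l, _, hl⟩ => ⟨l, hl⟩⟩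
  rintro rfl
  exact hnonab fun x y => by simp [hl]

end ContactLie
end
end
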